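/- Let α, β ≥ -1/2, let W ≥ 1, s ≥ 0 and 1 ≤ p ≤ ∞ be fixed, and define Υ_s(t,θ,φ) := ∫∫_{[-1,1]²} (t² + q(θ,φ,u,v))^{-(α+β+3/2 + W/(2p) + s/2)} dΠ_α(u) dΠ_β(v) for t ∈ (0,1), θ, φ ∈ [0,π] (with the convention W/(2p) = 0 when p = ∞). Then there exists a constant C (depending only on α, β, W, s, p) such that for all θ ≠ φ in [0,π]: ‖1 + Υ_s(·,θ,φ)‖_{L^p((0,1), t^{W−1}dt)} ≤ C |θ−φ|^{-s} / μ_{α,β}(B(θ,|θ−φ|)). -/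

import Mathlib

open MeasureTheory Real Set
open scoped ENNReal Classical

noncomputable def cab (α β : ℝ) : ℝ :=
  Real.Gamma (α + β + 2) / (2 ^ (α + β + 1) * Real.Gamma (α + 1) * Real.Gamma (β + 1))

noncomputable def F4 (a₁ a₂ b₁ b₂ x y : ℝ) : ℝ :=
  ∑' p : ℕ × ℕ,
    (Polynomial.eval a₁ (ascPochhammer ℝ (p.1 + p.2)) *
      Polynomial.eval a₂ (ascPochhammer ℝ (p.1 + p.2))) /
    (Polynomial.eval b₁ (ascPochhammer ℝ p.1) * Polynomial.eval b₂ (ascPochhammer ℝ p.2) *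
      (Nat.factorial p.1) * (Nat.factorial p.2)) * x ^ p.1 * y ^ p.2

noncomputable def Hker (α β t θ φ : ℝ) : ℝ :=
  cab α β * Real.sinh (t / 2) / Real.cosh (t / 2) ^ (α + β + 2) *
    F4 ((α + β + 2) / 2) ((α + β + 3) / 2) (α + 1) (β + 1)
      ((Real.sin (θ / 2) * Real.sin (φ / 2) / Real.cosh (t / 2)) ^ 2)
      ((Real.cos (θ / 2) * Real.cos (φ / 2) / Real.cosh (t / 2)) ^ 2)

noncomputable def qf (θ φ u v : ℝ) : ℝ :=
  1 - u * Real.sin (θ / 2) * Real.sin (φ / 2) - v * Real.cos (θ / 2) * Real.cos (φ / 2)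

noncomputable def Psi (α β t θ φ u v : ℝ) : ℝ :=
  cab α β * Real.sinh (t / 2) / (Real.cosh (t / 2) - 1 + qf θ φ u v) ^ (α + β + 2)

noncomputable def PsiE (α β t θ φ u v : ℝ) : ℝ :=
  (Psi α β t θ φ u v + Psi α β t θ φ (-u) v + Psi α β t θ φ u (-v) +
    Psi α β t θ φ (-u) (-v)) / 4

noncomputable def PiMeas (ν : ℝ) : Measure ℝ :=
  if ν = -(1/2) then (2⁻¹ : ℝ≥0∞) • (Measure.dirac (-1) + Measure.dirac 1)
  else (volume.restrict (Icc (-1 : ℝ) 1)).withDensity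
    (fun u => ENNReal.ofReal
      (Real.Gamma (ν + 1) / (Real.sqrt π * Real.Gamma (ν + 1/2)) * (1 - u ^ 2) ^ (ν - 1/2)))

noncomputable def PiFun (γ u : ℝ) : ℝ :=
  Real.Gamma (γ + 1) / (Real.sqrt π * Real.Gamma (γ + 1/2)) *
    ∫ w in (0 : ℝ)..u, (1 - w ^ 2) ^ (γ - 1/2)

noncomputable def PiInt (ν : ℝ) (S : Set ℝ) (f : ℝ → ℝ) : ℝ :=
  if ν = -(1/2) then
    ((if (-1 : ℝ) ∈ S then f (-1) else 0) + (if (1 : ℝ) ∈ S then f 1 else 0)) / 2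
  else ∫ u in S, f u *
    (Real.Gamma (ν + 1) / (Real.sqrt π * Real.Gamma (ν + 1/2)) * (1 - u ^ 2) ^ (ν - 1/2))

noncomputable def muab (α β : ℝ) : Measure ℝ :=
  (volume.restrict (Icc (0 : ℝ) π)).withDensity
    (fun θ => ENNReal.ofReal (Real.sin (θ / 2) ^ (2 * α + 1) * Real.cos (θ / 2) ^ (2 * β + 1)))

def ballI (θ r : ℝ) : Set ℝ := Ioo (θ - r) (θ + r) ∩ Icc 0 π


/-- The Bochner integral of a nonnegative function is bounded by any bound on its lower integral. -/
theorem integral_le_of_lintegral_ofReal_le {X : Type*} [MeasurableSpace X] {μ : Measure X}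
    {f : X → ℝ} {c : ℝ} (hf : ∀ᵐ x ∂μ, 0 ≤ f x) (hc : 0 ≤ c)
    (h : ∫⁻ x, ENNReal.ofReal (f x) ∂μ ≤ ENNReal.ofReal c) : ∫ x, f x ∂μ ≤ c := by
  have h1 := norm_integral_le_lintegral_norm (μ := μ) f
  have h2 : ∫⁻ x, ENNReal.ofReal ‖f x‖ ∂μ = ∫⁻ x, ENNReal.ofReal (f x) ∂μ := by
    refine lintegral_congr_ae ?_
    filter_upwards [hf] with x hx
    rw [Real.norm_of_nonneg hx]
  rw [h2] at h1
  exact (le_abs_self _).trans (h1.trans (ENNReal.toReal_le_of_le_ofReal hc h))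

theorem lintegral_Ioc_rpow_sub_one {A r : ℝ} (hA : 0 < A) (hr : 0 ≤ r) :
    ∫⁻ x in Ioc 0 r, ENNReal.ofReal (x ^ (A - 1)) = ENNReal.ofReal (r ^ A / A) := by
  have hi : IntegrableOn (fun x : ℝ => x ^ (A - 1)) (Ioc 0 r) :=
    (intervalIntegrable_iff_integrableOn_Ioc_of_le hr).1
      (intervalIntegral.intervalIntegrable_rpow' (by linarith))
  rw [← ofReal_integral_eq_lintegral_ofReal hi, ← intervalIntegral.integral_of_le hr,
    integral_rpow (Or.inl (by linarith))]
  · rw [sub_add_cancel, zero_rpow hA.ne', sub_zero]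
  · filter_upwards [ae_restrict_mem measurableSet_Ioc] with x hx
    exact rpow_nonneg hx.1.le _

theorem lintegral_Ioi_rpow_neg_sub_one {κ r : ℝ} (hκ : 0 < κ) (hr : 0 < r) :
    ∫⁻ x in Ioi r, ENNReal.ofReal (x ^ (-κ - 1)) = ENNReal.ofReal (r ^ (-κ) / κ) := by
  rw [← ofReal_integral_eq_lintegral_ofReal (integrableOn_Ioi_rpow_of_lt (by linarith) hr),
    integral_Ioi_rpow_of_lt (by linarith) hr]
  · rw [sub_add_cancel, neg_div_neg_eq]
  · filter_upwards [ae_restrict_mem measurableSet_Ioi] with x hx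
    exact rpow_nonneg (hr.trans hx).le _

theorem lintegral_Ioi_rpow_mul_rpow_le {A κ E X : ℝ} (hA : 0 < A) (hκ : 0 < κ) (hE : 0 < E)
    (hX : 0 < X) :
    ∫⁻ x in Ioi 0, ENNReal.ofReal (x ^ (A - 1) * (E + x * X) ^ (-(A + κ)))
      ≤ ENNReal.ofReal ((1 / A + 1 / κ) * E ^ (-κ) * X ^ (-A)) := by
  have hr : 0 < E / X := div_pos hE hX
  have hrA : (E / X) ^ A = E ^ A * X ^ (-A) := by
    rw [div_rpow hE.le hX.le, rpow_neg hX.le, div_eq_mul_inv]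
  have hrκ : (E / X) ^ (-κ) = E ^ (-κ) * X ^ κ := by
    rw [div_rpow hE.le hX.le, rpow_neg hX.le κ, div_inv_eq_mul]
  have near : ∫⁻ x in Ioc 0 (E / X), ENNReal.ofReal (x ^ (A - 1) * (E + x * X) ^ (-(A + κ)))
      ≤ ENNReal.ofReal (1 / A * E ^ (-κ) * X ^ (-A)) := by
    calc _ ≤ ∫⁻ x in Ioc 0 (E / X),
          ENNReal.ofReal (E ^ (-(A + κ))) * ENNReal.ofReal (x ^ (A - 1)) := by
          refine setLIntegral_mono' measurableSet_Ioc fun x hx => ?_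
          rw [← ENNReal.ofReal_mul (by positivity), mul_comm]
          refine ENNReal.ofReal_le_ofReal (mul_le_mul_of_nonneg_right ?_ (rpow_nonneg hx.1.le _))
          exact rpow_le_rpow_of_nonpos hE (by nlinarith [hx.1]) (by linarith)
      _ = _ := by
          rw [lintegral_const_mul' _ _ ENNReal.ofReal_ne_top, lintegral_Ioc_rpow_sub_one hA hr.le,
            ← ENNReal.ofReal_mul (by positivity), hrA, neg_add, rpow_add hE, rpow_neg hE.le A]
          congr 1
          have := (rpow_pos_of_pos hE A).ne'
          field_simp
  have far : ∫⁻ x in Ioi (E / X), ENNReal.ofReal (x ^ (A - 1) * (E + x * X) ^ (-(A + κ)))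
      ≤ ENNReal.ofReal (1 / κ * E ^ (-κ) * X ^ (-A)) := by
    calc _ ≤ ∫⁻ x in Ioi (E / X),
          ENNReal.ofReal (X ^ (-(A + κ))) * ENNReal.ofReal (x ^ (-κ - 1)) := by
          refine setLIntegral_mono' measurableSet_Ioi fun x hx => ?_
          have hx0 : 0 < x := hr.trans hx
          rw [← ENNReal.ofReal_mul (by positivity)]
          refine ENNReal.ofReal_le_ofReal ?_
          calc x ^ (A - 1) * (E + x * X) ^ (-(A + κ)) ≤ x ^ (A - 1) * (x * X) ^ (-(A + κ)) := by
                refine mul_le_mul_of_nonneg_left ?_ (by positivity)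
                exact rpow_le_rpow_of_nonpos (by positivity) (by linarith) (by linarith)
            _ = X ^ (-(A + κ)) * x ^ (-κ - 1) := by
                rw [mul_rpow hx0.le hX.le, ← mul_assoc, ← rpow_add hx0, mul_comm]
                ring_nf
      _ = _ := by
          rw [lintegral_const_mul' _ _ ENNReal.ofReal_ne_top, lintegral_Ioi_rpow_neg_sub_one hκ hr,
            ← ENNReal.ofReal_mul (by positivity), hrκ, neg_add, rpow_add hX, rpow_neg hX.le κ]
          congr 1
          have := (rpow_pos_of_pos hX κ).ne'
          field_simp
  rw [← Ioc_union_Ioi_eq_Ioi hr.le]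
  refine (lintegral_union_le _ _ _).trans ((add_le_add near far).trans_eq ?_)
  rw [← ENNReal.ofReal_add (by positivity) (by positivity)]
  congr 1
  ring

theorem lintegral_Ioc_rpow_mul_rpow_le {A κ : ℝ} (hA : 0 < A) (hκ : 0 < κ) :
    ∃ C : ℝ, 0 < C ∧ ∀ E X : ℝ, 0 < E → 0 ≤ X →
      ∫⁻ x in Ioc 0 2, ENNReal.ofReal (x ^ (A - 1) * (E + x * X) ^ (-(A + κ)))
        ≤ ENNReal.ofReal (C * E ^ (-κ) * (E + X) ^ (-A)) := by
  refine ⟨2 ^ A * (1 / A + 1 / κ) + 2 ^ A * (2 ^ A / A), by positivity, fun E X hE hX => ?_⟩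
  have halve : ∀ Z : ℝ, 0 < Z → E + X ≤ 2 * Z → Z ^ (-A) ≤ 2 ^ A * (E + X) ^ (-A) := by
    intro Z hZ h
    have := rpow_le_rpow_of_nonpos (by linarith) h (neg_nonpos.2 hA.le)
    rw [mul_rpow two_pos.le hZ.le, rpow_neg two_pos.le] at this
    have h2 : (0 : ℝ) < 2 ^ A := by positivity
    calc Z ^ (-A) = 2 ^ A * ((2 ^ A)⁻¹ * Z ^ (-A)) := by field_simp
      _ ≤ _ := mul_le_mul_of_nonneg_left this h2.le
  have hP : 0 ≤ E ^ (-κ) * (E + X) ^ (-A) := by positivity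
  rcases le_total E X with h | h
  · have hX' : 0 < X := hE.trans_le h
    refine (lintegral_mono_set Ioc_subset_Ioi_self).trans
      ((lintegral_Ioi_rpow_mul_rpow_le hA hκ hE hX').trans (ENNReal.ofReal_le_ofReal ?_))
    calc (1 / A + 1 / κ) * E ^ (-κ) * X ^ (-A)
        ≤ (1 / A + 1 / κ) * E ^ (-κ) * (2 ^ A * (E + X) ^ (-A)) :=
          mul_le_mul_of_nonneg_left (halve X hX' (by linarith)) (by positivity)
      _ = 2 ^ A * (1 / A + 1 / κ) * (E ^ (-κ) * (E + X) ^ (-A)) := by ring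
      _ ≤ (2 ^ A * (1 / A + 1 / κ) + 2 ^ A * (2 ^ A / A)) * (E ^ (-κ) * (E + X) ^ (-A)) :=
          mul_le_mul_of_nonneg_right (le_add_of_nonneg_right (by positivity)) hP
      _ = _ := by ring
  · calc _ ≤ ∫⁻ x in Ioc 0 2, ENNReal.ofReal (E ^ (-(A + κ))) * ENNReal.ofReal (x ^ (A - 1)) := by
          refine setLIntegral_mono' measurableSet_Ioc fun x hx => ?_
          rw [← ENNReal.ofReal_mul (by positivity), mul_comm]
          refine ENNReal.ofReal_le_ofReal (mul_le_mul_of_nonneg_right ?_ (rpow_nonneg hx.1.le _))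
          exact rpow_le_rpow_of_nonpos hE (by nlinarith [hx.1]) (by linarith)
      _ = ENNReal.ofReal (E ^ (-(A + κ)) * (2 ^ A / A)) := by
          rw [lintegral_const_mul' _ _ ENNReal.ofReal_ne_top,
            lintegral_Ioc_rpow_sub_one hA two_pos.le, ← ENNReal.ofReal_mul (by positivity)]
      _ ≤ _ := by
          refine ENNReal.ofReal_le_ofReal ?_
          rw [neg_add, rpow_add hE]
          calc E ^ (-A) * E ^ (-κ) * (2 ^ A / A)
              ≤ 2 ^ A * (E + X) ^ (-A) * E ^ (-κ) * (2 ^ A / A) := by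
                gcongr
                exact halve E hE (by linarith)
            _ = 2 ^ A * (2 ^ A / A) * (E ^ (-κ) * (E + X) ^ (-A)) := by ring
            _ ≤ (2 ^ A * (1 / A + 1 / κ) + 2 ^ A * (2 ^ A / A)) * (E ^ (-κ) * (E + X) ^ (-A)) :=
                mul_le_mul_of_nonneg_right (le_add_of_nonneg_left (by positivity)) hP
            _ = _ := by ring

theorem ae_PiMeas_mem_Icc (ν : ℝ) : ∀ᵐ u ∂PiMeas ν, u ∈ Icc (-1 : ℝ) 1 := by
  unfold PiMeas
  split_ifs
  · rw [Measure.ae_ennreal_smul_measure_iff (by simp), ae_add_measure_iff]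
    exact ⟨(ae_dirac_iff (measurableSet_Icc (a := (-1 : ℝ)) (b := 1))).2 (by norm_num),
      (ae_dirac_iff (measurableSet_Icc (a := (-1 : ℝ)) (b := 1))).2 (by norm_num)⟩
  · exact (withDensity_absolutelyContinuous _ _).ae_le (ae_restrict_mem measurableSet_Icc)

theorem one_sub_sq_rpow_le {A u : ℝ} (hA : 0 < A) (h0 : 0 ≤ u) (h1 : u ≤ 1) :
    (1 - u ^ 2) ^ (A - 1) ≤ 2 ^ A * (1 - u) ^ (A - 1) := by
  have hfac : (1 : ℝ) - u ^ 2 = (1 - u) * (1 + u) := by ring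
  rw [hfac, mul_rpow (by linarith) (by linarith), mul_comm]
  refine mul_le_mul_of_nonneg_right ?_ (rpow_nonneg (by linarith) _)
  have h2 : (1 + u) ^ A ≤ 2 ^ A := rpow_le_rpow (by linarith) (by linarith) hA.le
  refine le_trans (rpow_le_rpow_of_exponent_le (by linarith) (by linarith)) h2

theorem lintegral_comp_one_sub (g : ℝ → ℝ≥0∞) :
    ∫⁻ u in Ico (-1 : ℝ) 1, g (1 - u) = ∫⁻ x in Ioc 0 2, g x := by
  rw [← lintegral_indicator measurableSet_Ico, ← lintegral_indicator measurableSet_Ioc,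
    ← lintegral_sub_left_eq_self ((Ioc 0 2).indicator g) (1 : ℝ)]
  refine lintegral_congr fun u => ?_
  by_cases h : u ∈ Ico (-1 : ℝ) 1
  · rw [indicator_of_mem h,
      indicator_of_mem (show 1 - u ∈ Ioc (0 : ℝ) 2 from ⟨by linarith [h.2], by linarith [h.1]⟩)]
  · rw [indicator_of_notMem h, indicator_of_notMem]
    exact fun h' => h ⟨by linarith [h'.2], by linarith [h'.1]⟩

theorem lintegral_comp_one_add (g : ℝ → ℝ≥0∞) :
    ∫⁻ u in Ioc (-1 : ℝ) 1, g (1 + u) = ∫⁻ x in Ioc 0 2, g x := by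
  rw [← lintegral_indicator measurableSet_Ioc, ← lintegral_indicator measurableSet_Ioc,
    ← lintegral_add_left_eq_self ((Ioc 0 2).indicator g) (1 : ℝ)]
  refine lintegral_congr fun u => ?_
  by_cases h : u ∈ Ioc (-1 : ℝ) 1
  · rw [indicator_of_mem h,
      indicator_of_mem (show 1 + u ∈ Ioc (0 : ℝ) 2 from ⟨by linarith [h.1], by linarith [h.2]⟩)]
  · rw [indicator_of_notMem h, indicator_of_notMem]
    exact fun h' => h ⟨by linarith [h'.1], by linarith [h'.2]⟩

theorem jacobi_weight_mul_rpow_le {A κ E X u : ℝ} (hA : 0 < A) (hκ : 0 < κ) (hE : 0 < E)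
    (hX : 0 ≤ X) (hu : u ∈ Ioo (-1 : ℝ) 1) :
    (1 - u ^ 2) ^ (A - 1) * (E + (1 - u) * X) ^ (-(A + κ)) ≤
      2 ^ A * ((1 - u) ^ (A - 1) * (E + (1 - u) * X) ^ (-(A + κ))) +
      2 ^ A * ((1 + u) ^ (A - 1) * (E + (1 + u) * X) ^ (-(A + κ))) := by
  have h1 : 0 < 1 - u := by linarith [hu.2]
  have h2 : 0 < 1 + u := by linarith [hu.1]
  rcases le_total 0 u with h | h
  · refine le_add_of_le_of_nonneg ?_ (by positivity)
    rw [← mul_assoc]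
    exact mul_le_mul_of_nonneg_right (one_sub_sq_rpow_le hA h hu.2.le) (by positivity)
  · refine le_add_of_nonneg_of_le (by positivity) ?_
    rw [← mul_assoc]
    have hw := one_sub_sq_rpow_le (u := -u) hA (by linarith) (by linarith)
    rw [neg_sq, sub_neg_eq_add] at hw
    refine mul_le_mul hw ?_ (by positivity) (by positivity)
    exact rpow_le_rpow_of_nonpos (by positivity) (by nlinarith) (by linarith)

theorem lintegral_PiMeas_rpow_le {ν κ : ℝ} (hν : -(1 / 2) ≤ ν) (hκ : 0 < κ) :
    ∃ C : ℝ, 0 < C ∧ ∀ E X : ℝ, 0 < E → 0 ≤ X →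
      ∫⁻ u, ENNReal.ofReal ((E + (1 - u) * X) ^ (-(ν + 1 / 2 + κ))) ∂PiMeas ν
        ≤ ENNReal.ofReal (C * E ^ (-κ) * (E + X) ^ (-(ν + 1 / 2))) := by
  rcases hν.eq_or_lt with rfl | hν'
  · refine ⟨1, one_pos, fun E X hE hX => ?_⟩
    have h2 : (E + 2 * X) ^ (-κ) ≤ E ^ (-κ) :=
      rpow_le_rpow_of_nonpos hE (by linarith) (by linarith)
    have e1 : (1 : ℝ) - -1 = 2 := by norm_num
    simp only [PiMeas, if_true, lintegral_smul_measure, lintegral_add_measure, lintegral_dirac,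
      neg_add_cancel, zero_add, neg_zero, rpow_zero, mul_one, one_mul, sub_self, zero_mul,
      add_zero, e1, smul_eq_mul]
    calc _ ≤ 2⁻¹ * (ENNReal.ofReal (E ^ (-κ)) + ENNReal.ofReal (E ^ (-κ))) := by gcongr
      _ = _ := by
        rw [← two_mul, ← mul_assoc, ENNReal.inv_mul_cancel two_ne_zero ENNReal.ofNat_ne_top,
          one_mul]
  · obtain ⟨A, hAν⟩ : ∃ A, A = ν + 1 / 2 := ⟨_, rfl⟩
    have hA : 0 < A := by linarith
    obtain ⟨K, hK, hKb⟩ := lintegral_Ioc_rpow_mul_rpow_le hA hκ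
    set c : ℝ := Real.Gamma (ν + 1) / (Real.sqrt π * Real.Gamma (ν + 1 / 2)) with hc
    have hc0 : 0 < c := by
      have := Real.Gamma_pos_of_pos (show 0 < ν + 1 by linarith)
      have := Real.Gamma_pos_of_pos (show 0 < ν + 1 / 2 by linarith)
      positivity
    refine ⟨c * (2 * 2 ^ A * K), by positivity, fun E X hE hX => ?_⟩
    rw [← hAν]
    set g : ℝ → ℝ≥0∞ := fun x => ENNReal.ofReal (x ^ (A - 1) * (E + x * X) ^ (-(A + κ))) with hg
    have hgm : Measurable g := by fun_prop
    have hbound := hKb E X hE hX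
    have hmeas : Measurable fun u : ℝ => ENNReal.ofReal (c * (1 - u ^ 2) ^ (ν - 1 / 2)) := by
      fun_prop
    rw [PiMeas, if_neg hν'.ne']
    calc _ ≤ ∫⁻ u in Icc (-1 : ℝ) 1, ENNReal.ofReal (c * (1 - u ^ 2) ^ (ν - 1 / 2)) *
            ENNReal.ofReal ((E + (1 - u) * X) ^ (-(A + κ))) :=
          lintegral_withDensity_le_lintegral_mul _ hmeas _
      _ = ∫⁻ u in Ioo (-1 : ℝ) 1, ENNReal.ofReal (c * (1 - u ^ 2) ^ (ν - 1 / 2)) *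
            ENNReal.ofReal ((E + (1 - u) * X) ^ (-(A + κ))) := by
          rw [restrict_Ioo_eq_restrict_Icc]
      _ ≤ ∫⁻ u in Ioo (-1 : ℝ) 1, ENNReal.ofReal (c * 2 ^ A) * (g (1 - u) + g (1 + u)) := by
          refine setLIntegral_mono' measurableSet_Ioo fun u hu => ?_
          have h1 : 0 < 1 - u := by linarith [hu.2]
          have h2 : 0 < 1 + u := by linarith [hu.1]
          have h3 : 0 ≤ 1 - u ^ 2 := by nlinarith
          rw [← ENNReal.ofReal_mul (by positivity), hg, ← ENNReal.ofReal_add (by positivity)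
            (by positivity), ← ENNReal.ofReal_mul (by positivity)]
          refine ENNReal.ofReal_le_ofReal ?_
          rw [mul_assoc, mul_assoc, show ν - 1 / 2 = A - 1 by linarith, mul_add]
          exact mul_le_mul_of_nonneg_left (jacobi_weight_mul_rpow_le hA hκ hE hX hu) hc0.le
      _ = ENNReal.ofReal (c * 2 ^ A) *
            ((∫⁻ u in Ioo (-1 : ℝ) 1, g (1 - u)) + ∫⁻ u in Ioo (-1 : ℝ) 1, g (1 + u)) := by
          rw [lintegral_const_mul' _ _ ENNReal.ofReal_ne_top, lintegral_add_left (by fun_prop)]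
      _ ≤ ENNReal.ofReal (c * 2 ^ A) * (ENNReal.ofReal (K * E ^ (-κ) * (E + X) ^ (-A)) +
            ENNReal.ofReal (K * E ^ (-κ) * (E + X) ^ (-A))) := by
          gcongr
          · exact (lintegral_mono_set Ioo_subset_Ico_self).trans
              ((lintegral_comp_one_sub g).le.trans hbound)
          · exact (lintegral_mono_set Ioo_subset_Ioc_self).trans
              ((lintegral_comp_one_add g).le.trans hbound)
      _ = _ := by
          rw [← ENNReal.ofReal_add (by positivity) (by positivity),
            ← ENNReal.ofReal_mul (by positivity)]
          congr 1
          ring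

/-- Integrating a negative power of `E + (1 - u) X + (1 - v) Y` against `Π_α ⊗ Π_β`. -/
theorem integral_PiMeas_PiMeas_rpow_le {α β κ : ℝ} (hα : -(1 / 2) ≤ α) (hβ : -(1 / 2) ≤ β)
    (hκ : 0 < κ) :
    ∃ C : ℝ, 0 < C ∧ ∀ (E X Y : ℝ) (g : ℝ → ℝ → ℝ), 0 < E → 0 ≤ X → 0 ≤ Y →
      (∀ u ∈ Icc (-1 : ℝ) 1, ∀ v ∈ Icc (-1 : ℝ) 1, E + (1 - u) * X + (1 - v) * Y ≤ g u v) →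
      ∫ v, (∫ u, g u v ^ (-(α + 1 / 2 + (β + 1 / 2 + κ))) ∂PiMeas α) ∂PiMeas β
        ≤ C * E ^ (-κ) * (E + X) ^ (-(α + 1 / 2)) * (E + Y) ^ (-(β + 1 / 2)) := by
  obtain ⟨C₁, hC₁, h₁⟩ := lintegral_PiMeas_rpow_le hα (show 0 < β + 1 / 2 + κ by linarith)
  obtain ⟨C₂, hC₂, h₂⟩ := lintegral_PiMeas_rpow_le hβ hκ
  refine ⟨C₁ * C₂, by positivity, fun E X Y g hE hX hY hg => ?_⟩
  have hterm : ∀ u ∈ Icc (-1 : ℝ) 1, ∀ Z : ℝ, 0 ≤ Z → 0 ≤ (1 - u) * Z := fun u hu Z hZ =>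
    mul_nonneg (by linarith [hu.2]) hZ
  have hgpos : ∀ u ∈ Icc (-1 : ℝ) 1, ∀ v ∈ Icc (-1 : ℝ) 1, 0 < g u v := fun u hu v hv => by
    linarith [hg u hu v hv, hterm u hu X hX, hterm v hv Y hY]
  have hinner : ∀ v ∈ Icc (-1 : ℝ) 1,
      ∫ u, g u v ^ (-(α + 1 / 2 + (β + 1 / 2 + κ))) ∂PiMeas α ≤
        C₁ * (E + X) ^ (-(α + 1 / 2)) * (E + (1 - v) * Y) ^ (-(β + 1 / 2 + κ)) := by
    intro v hv
    have hv0 := hterm v hv Y hY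
    have hE' : 0 < E + (1 - v) * Y := by linarith
    refine integral_le_of_lintegral_ofReal_le ?_ (by positivity) ?_
    · filter_upwards [ae_PiMeas_mem_Icc α] with u hu
      exact rpow_nonneg (hgpos u hu v hv).le _
    · calc _ ≤ ∫⁻ u, ENNReal.ofReal
            ((E + (1 - v) * Y + (1 - u) * X) ^ (-(α + 1 / 2 + (β + 1 / 2 + κ)))) ∂PiMeas α := by
            refine lintegral_mono_ae ?_
            filter_upwards [ae_PiMeas_mem_Icc α] with u hu
            refine ENNReal.ofReal_le_ofReal (rpow_le_rpow_of_nonpos ?_ ?_ (by linarith))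
            · linarith [hterm u hu X hX]
            · linarith [hg u hu v hv]
        _ ≤ _ := h₁ _ X hE' hX
        _ ≤ _ := by
            refine ENNReal.ofReal_le_ofReal ?_
            rw [mul_right_comm]
            refine mul_le_mul_of_nonneg_right (mul_le_mul_of_nonneg_left ?_ hC₁.le)
              (by positivity)
            exact rpow_le_rpow_of_nonpos (by linarith) (by linarith) (by linarith)
  refine integral_le_of_lintegral_ofReal_le ?_ (by positivity) ?_
  · filter_upwards [ae_PiMeas_mem_Icc β] with v hv
    refine integral_nonneg_of_ae ?_
    filter_upwards [ae_PiMeas_mem_Icc α] with u hu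
    exact rpow_nonneg (hgpos u hu v hv).le _
  · calc _ ≤ ∫⁻ v, ENNReal.ofReal (C₁ * (E + X) ^ (-(α + 1 / 2))) *
            ENNReal.ofReal ((E + (1 - v) * Y) ^ (-(β + 1 / 2 + κ))) ∂PiMeas β := by
          refine lintegral_mono_ae ?_
          filter_upwards [ae_PiMeas_mem_Icc β] with v hv
          rw [← ENNReal.ofReal_mul (by positivity)]
          exact ENNReal.ofReal_le_ofReal (hinner v hv)
      _ ≤ ENNReal.ofReal (C₁ * (E + X) ^ (-(α + 1 / 2))) *
            ENNReal.ofReal (C₂ * E ^ (-κ) * (E + Y) ^ (-(β + 1 / 2))) := by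
          rw [lintegral_const_mul' _ _ ENNReal.ofReal_ne_top]
          gcongr
          exact h₂ E Y hE hY
      _ = _ := by
          rw [← ENNReal.ofReal_mul (by positivity)]
          congr 1
          ring

theorem sq_div_add_le_qf {θ φ : ℝ} (hθ : θ ∈ Icc (0 : ℝ) π) (hφ : φ ∈ Icc (0 : ℝ) π) (u v : ℝ) :
    (|θ - φ| / 5) ^ 2 + (1 - u) * (sin (θ / 2) * sin (φ / 2)) +
      (1 - v) * (cos (θ / 2) * cos (φ / 2)) ≤ qf θ φ u v := by
  have hcos : cos (θ / 2 - φ / 2) ≤ 1 - 2 / π ^ 2 * (θ / 2 - φ / 2) ^ 2 := by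
    refine cos_le_one_sub_mul_cos_sq (abs_le.2 ⟨?_, ?_⟩) <;>
      linarith [hθ.1, hθ.2, hφ.1, hφ.2, pi_pos]
  have hpi : 2 / π ^ 2 ≥ 4 / 25 := by
    rw [ge_iff_le, div_le_div_iff₀ (by norm_num) (by positivity)]
    nlinarith [pi_lt_d2, pi_pos]
  have hsq : (|θ - φ| / 5) ^ 2 ≤ 2 / π ^ 2 * (θ / 2 - φ / 2) ^ 2 := by
    rw [div_pow, sq_abs]
    nlinarith [mul_le_mul_of_nonneg_right hpi (sq_nonneg (θ / 2 - φ / 2))]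
  rw [cos_sub] at hcos
  unfold qf
  nlinarith

theorem sq_le_of_abs_sub_le {x a b D : ℝ} (hx : 0 ≤ x) (ha : 0 ≤ a) (hb : 0 ≤ b)
    (hxa : |x - a| ≤ D / 2) (hab : |a - b| ≤ D / 2) : x ^ 2 ≤ 100 * ((D / 5) ^ 2 + a * b) := by
  have h1 : x ≤ a + D / 2 := by linarith [(abs_le.1 hxa).2]
  have h2 : a ≤ b + D / 2 := by linarith [(abs_le.1 hab).2]
  have h3 : x ^ 2 ≤ (a + D / 2) ^ 2 := by gcongr
  nlinarith [mul_le_mul_of_nonneg_left h2 ha, sq_nonneg (a - D / 2), mul_nonneg ha hb,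
    sq_nonneg D]

theorem abs_sin_half_sub_le (x y : ℝ) : |sin (x / 2) - sin (y / 2)| ≤ |x - y| / 2 := by
  have h := abs_sin_sub_sin_le (x / 2) (y / 2)
  rwa [← sub_div, abs_div, abs_two] at h

theorem abs_cos_half_sub_le (x y : ℝ) : |cos (x / 2) - cos (y / 2)| ≤ |x - y| / 2 := by
  have h := abs_cos_sub_cos_le (x / 2) (y / 2)
  rwa [← sub_div, abs_div, abs_two] at h

theorem sin_half_nonneg {x : ℝ} (hx : x ∈ Icc (0 : ℝ) π) : 0 ≤ sin (x / 2) :=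
  sin_nonneg_of_nonneg_of_le_pi (by linarith [hx.1]) (by linarith [hx.1, hx.2])

theorem cos_half_nonneg {x : ℝ} (hx : x ∈ Icc (0 : ℝ) π) : 0 ≤ cos (x / 2) :=
  cos_nonneg_of_neg_pi_div_two_le_of_le (by linarith [hx.1, pi_pos]) (by linarith [hx.2])

theorem muab_ballI_le {α β θ φ : ℝ} (hα : -(1 / 2) ≤ α) (hβ : -(1 / 2) ≤ β)
    (hθ : θ ∈ Icc (0 : ℝ) π) (hφ : φ ∈ Icc (0 : ℝ) π) :
    muab α β (ballI θ |θ - φ|) ≤ ENNReal.ofReal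
      (10 * 100 ^ (α + 1 / 2) * 100 ^ (β + 1 / 2) * (|θ - φ| / 5) *
        ((|θ - φ| / 5) ^ 2 + sin (θ / 2) * sin (φ / 2)) ^ (α + 1 / 2) *
        ((|θ - φ| / 5) ^ 2 + cos (θ / 2) * cos (φ / 2)) ^ (β + 1 / 2)) := by
  set D := |θ - φ| with hD
  set S := (D / 5) ^ 2 + sin (θ / 2) * sin (φ / 2) with hS
  set T := (D / 5) ^ 2 + cos (θ / 2) * cos (φ / 2) with hT
  have hD0 : 0 ≤ D := abs_nonneg _
  have hS0 : 0 ≤ S := by have := sin_half_nonneg hθ; have := sin_half_nonneg hφ; positivity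
  have hT0 : 0 ≤ T := by have := cos_half_nonneg hθ; have := cos_half_nonneg hφ; positivity
  have hmeas : MeasurableSet (ballI θ D) := measurableSet_Ioo.inter measurableSet_Icc
  rw [muab, withDensity_apply _ hmeas, Measure.restrict_restrict hmeas,
    inter_eq_self_of_subset_left (show ballI θ D ⊆ Icc 0 π from inter_subset_right)]
  calc _ ≤ ∫⁻ _ in ballI θ D,
          ENNReal.ofReal ((100 * S) ^ (α + 1 / 2) * (100 * T) ^ (β + 1 / 2)) := by
        refine setLIntegral_mono' hmeas fun x hx => ENNReal.ofReal_le_ofReal ?_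
        have hxθ : |x - θ| ≤ D := abs_le.2 ⟨by linarith [hx.1.1], by linarith [hx.1.2]⟩
        have hs := sq_le_of_abs_sub_le (sin_half_nonneg hx.2) (sin_half_nonneg hθ)
          (sin_half_nonneg hφ) ((abs_sin_half_sub_le x θ).trans (by linarith))
          (abs_sin_half_sub_le θ φ)
        have hc := sq_le_of_abs_sub_le (cos_half_nonneg hx.2) (cos_half_nonneg hθ)
          (cos_half_nonneg hφ) ((abs_cos_half_sub_le x θ).trans (by linarith))
          (abs_cos_half_sub_le θ φ)
        rw [show 2 * α + 1 = 2 * (α + 1 / 2) by ring, show 2 * β + 1 = 2 * (β + 1 / 2) by ring,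
          rpow_mul (sin_half_nonneg hx.2), rpow_mul (cos_half_nonneg hx.2), rpow_two, rpow_two]
        exact mul_le_mul (rpow_le_rpow (sq_nonneg _) hs (by linarith))
          (rpow_le_rpow (sq_nonneg _) hc (by linarith)) (by positivity) (by positivity)
    _ ≤ ENNReal.ofReal ((100 * S) ^ (α + 1 / 2) * (100 * T) ^ (β + 1 / 2)) *
          ENNReal.ofReal (2 * D) := by
        rw [setLIntegral_const]
        gcongr
        refine (measure_mono inter_subset_left).trans_eq ?_
        rw [Real.volume_Ioo]
        congr 1
        ring
    _ = _ := by
        rw [← ENNReal.ofReal_mul (by positivity), mul_rpow (by norm_num) hS0,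
          mul_rpow (by norm_num) hT0]
        congr 1
        ring

theorem muab_ballI_ne_zero (α β : ℝ) {θ φ : ℝ} (hθ : θ ∈ Icc (0 : ℝ) π)
    (hφ : φ ∈ Icc (0 : ℝ) π) (hne : θ ≠ φ) : muab α β (ballI θ |θ - φ|) ≠ 0 := by
  have hsub : Ioo (min θ φ) (max θ φ) ⊆ {x | ENNReal.ofReal
      (sin (x / 2) ^ (2 * α + 1) * cos (x / 2) ^ (2 * β + 1)) ≠ 0} ∩ ballI θ |θ - φ| := by
    intro x hx
    have hx0 : 0 < x := (le_min hθ.1 hφ.1).trans_lt hx.1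
    have hxπ : x < π := hx.2.trans_le (max_le hθ.2 hφ.2)
    have hs : 0 < sin (x / 2) := sin_pos_of_pos_of_lt_pi (by linarith) (by linarith)
    have hc : 0 < cos (x / 2) := cos_pos_of_mem_Ioo ⟨by linarith, by linarith⟩
    refine ⟨(ENNReal.ofReal_pos.2 (by positivity)).ne', ?_, hx0.le, hxπ.le⟩
    obtain ⟨h1, h2⟩ := hx
    rcases le_total θ φ with h | h
    · rw [min_eq_left h] at h1
      rw [max_eq_right h] at h2
      rw [abs_of_nonpos (by linarith)]
      constructor <;> linarith
    · rw [min_eq_right h] at h1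
      rw [max_eq_left h] at h2
      rw [abs_of_nonneg (by linarith)]
      constructor <;> linarith
  have hIcc : Ioo (min θ φ) (max θ φ) ⊆ Icc 0 π := fun x hx =>
    ⟨(le_min hθ.1 hφ.1).trans hx.1.le, hx.2.le.trans (max_le hθ.2 hφ.2)⟩
  rw [muab, Ne, withDensity_apply_eq_zero (by fun_prop)]
  intro h0
  have h1 := measure_mono_null hsub h0
  rw [Measure.restrict_apply measurableSet_Ioo, inter_eq_self_of_subset_left hIcc,
    Real.volume_Ioo, ENNReal.ofReal_eq_zero, sub_nonpos] at h1
  exact h1.not_gt (min_lt_max.2 hne)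

theorem eLpNorm_add_rpow_le {W s : ℝ} (hW : 0 < W) (hs : 0 ≤ s) {p : ℝ≥0∞} (hp : p ≠ 0) :
    ∃ C : ℝ, 0 < C ∧ ∀ d : ℝ, 0 < d →
      eLpNorm (fun t : ℝ => (t + d) ^ (-(1 + W / p.toReal + s))) p
        ((volume.restrict (Ioo (0 : ℝ) 1)).withDensity (fun t => ENNReal.ofReal (t ^ (W - 1))))
        ≤ ENNReal.ofReal (C * d ^ (-(1 + s))) := by
  rcases eq_or_ne p ∞ with rfl | htop
  · refine ⟨1, one_pos, fun d hd => ?_⟩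
    rw [eLpNorm_exponent_top, one_mul]
    refine eLpNormEssSup_le_of_ae_bound ?_
    refine (withDensity_absolutelyContinuous _ _).ae_le ?_
    filter_upwards [ae_restrict_mem measurableSet_Ioo] with t ht
    have : 0 < t + d := by linarith [ht.1]
    rw [Real.norm_of_nonneg (by positivity), ENNReal.toReal_top, div_zero, add_zero]
    exact rpow_le_rpow_of_nonpos hd (by linarith [ht.1]) (by linarith)
  · have hp0 : 0 < p.toReal := ENNReal.toReal_pos hp htop
    set r := p.toReal with hr
    have hκ : 0 < (1 + s) * r := by positivity
    set K : ℝ := 1 / W + 1 / ((1 + s) * r)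
    have hK0 : 0 < K := by positivity
    refine ⟨K ^ (1 / r), by positivity, fun d hd => ?_⟩
    have key : ∫⁻ t, ‖(t + d) ^ (-(1 + W / r + s))‖ₑ ^ r
        ∂((volume.restrict (Ioo (0 : ℝ) 1)).withDensity (fun t => ENNReal.ofReal (t ^ (W - 1))))
        ≤ ENNReal.ofReal (K * d ^ (-((1 + s) * r))) := by
      calc _ ≤ ∫⁻ t in Ioo (0 : ℝ) 1,
            ENNReal.ofReal (t ^ (W - 1)) * ‖(t + d) ^ (-(1 + W / r + s))‖ₑ ^ r :=
            lintegral_withDensity_le_lintegral_mul _ (by fun_prop) _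
        _ = ∫⁻ t in Ioo (0 : ℝ) 1,
            ENNReal.ofReal (t ^ (W - 1) * (d + t * 1) ^ (-(W + (1 + s) * r))) := by
            refine setLIntegral_congr_fun measurableSet_Ioo fun t ht => ?_
            have ht0 : 0 < t := ht.1
            have htd : 0 < t + d := by linarith
            rw [Real.enorm_of_nonneg (by positivity), ENNReal.ofReal_rpow_of_nonneg (by positivity)
              hp0.le, ← ENNReal.ofReal_mul (by positivity), ← rpow_mul htd.le, mul_one,
              add_comm d t]
            congr 3
            field_simp
            ring
        _ ≤ _ := lintegral_mono_set Ioo_subset_Ioi_self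
        _ ≤ _ := lintegral_Ioi_rpow_mul_rpow_le hW hκ hd one_pos
        _ = _ := by rw [one_rpow, mul_one]
    rw [eLpNorm_eq_lintegral_rpow_enorm_toReal hp htop, ← hr]
    refine (ENNReal.rpow_le_rpow key (by positivity)).trans_eq ?_
    rw [ENNReal.ofReal_rpow_of_nonneg (by positivity) (by positivity),
      mul_rpow hK0.le (by positivity), ← rpow_mul hd.le]
    congr 3
    field_simp

theorem one_le_two_rpow_mul_rpow_neg {z e : ℝ} (hz : 0 < z) (hz2 : z ≤ 2) (he : 0 ≤ e) :
    1 ≤ 2 ^ e * z ^ (-e) := by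
  rw [rpow_neg hz.le, ← div_eq_mul_inv, one_le_div (by positivity)]
  exact rpow_le_rpow hz.le hz2 he

theorem add_sq_rpow_neg_le {t d κ : ℝ} (ht : 0 < t) (hd : 0 < d) (hκ : 0 ≤ κ) :
    (t ^ 2 + d ^ 2) ^ (-κ) ≤ 2 ^ κ * (t + d) ^ (-(2 * κ)) := by
  calc (t ^ 2 + d ^ 2) ^ (-κ) ≤ ((t + d) ^ 2 / 2) ^ (-κ) :=
        rpow_le_rpow_of_nonpos (by positivity) (by nlinarith [sq_nonneg (t - d)]) (by linarith)
    _ = _ := by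
        rw [div_rpow (by positivity) (by positivity), rpow_neg two_pos.le, div_inv_eq_mul, mul_comm,
          ← rpow_two, ← rpow_mul (by positivity), mul_neg]

theorem finbridge_high (α β : ℝ) (hα : -(1/2) ≤ α) (hβ : -(1/2) ≤ β)
    (W s : ℝ) (hW : 1 ≤ W) (hs : 0 ≤ s) (p : ℝ≥0∞) (hp : 1 ≤ p) :
    ∃ C : ℝ, 0 < C ∧ ∀ θ ∈ Icc (0 : ℝ) π, ∀ φ ∈ Icc (0 : ℝ) π, θ ≠ φ →
      eLpNorm (fun t : ℝ =>
          1 + ∫ v, (∫ u,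
                (t ^ 2 + qf θ φ u v) ^ (-(α + β + 3/2 + W / (2 * p.toReal) + s / 2))
              ∂(PiMeas α)) ∂(PiMeas β)) p
          ((volume.restrict (Ioo (0 : ℝ) 1)).withDensity
            (fun t => ENNReal.ofReal (t ^ (W - 1))))
        ≤ ENNReal.ofReal
            (C * |θ - φ| ^ (-s) / (muab α β (ballI θ |θ - φ|)).toReal) := by
  have hWp : 0 ≤ W / p.toReal := div_nonneg (by linarith) ENNReal.toReal_nonneg
  obtain ⟨κ, hκ⟩ : ∃ κ, κ = 1 / 2 + W / (2 * p.toReal) + s / 2 := ⟨_, rfl⟩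
  have hκ2 : 2 * κ = 1 + W / p.toReal + s := by
    rw [hκ, mul_comm 2 p.toReal, ← div_div]
    ring
  have hκ0 : 0 < κ := by linarith
  have hexp : -(α + β + 3/2 + W / (2 * p.toReal) + s / 2) =
      -(α + 1 / 2 + (β + 1 / 2 + κ)) := by
    rw [hκ]
    ring
  have hA : 0 ≤ α + 1 / 2 := by linarith
  have hB : 0 ≤ β + 1 / 2 := by linarith
  obtain ⟨C₁, hC₁, h₁⟩ := integral_PiMeas_PiMeas_rpow_le hα hβ hκ0
  obtain ⟨C₂, hC₂, h₂⟩ := eLpNorm_add_rpow_le (zero_lt_one.trans_le hW) hs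
    (zero_lt_one.trans_le hp).ne'
  set K : ℝ := 2 ^ (2 * κ) * 2 ^ (α + 1 / 2) * 2 ^ (β + 1 / 2) + C₁ * 2 ^ κ with hK
  set L : ℝ := 10 * 100 ^ (α + 1 / 2) * 100 ^ (β + 1 / 2) with hL
  have hK0 : 0 < K := by positivity
  have hL0 : 0 < L := by positivity
  refine ⟨K * C₂ * 5 ^ s * L, by positivity, fun θ hθ φ hφ hne => ?_⟩
  have hD : 0 < |θ - φ| := abs_pos.2 (sub_ne_zero.2 hne)
  have hμ := muab_ballI_le hα hβ hθ hφ
  have hμ0 := muab_ballI_ne_zero α β hθ hφ hne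
  have hq := sq_div_add_le_qf hθ hφ
  have hDπ : |θ - φ| ≤ π := abs_le.2 ⟨by linarith [hθ.1, hφ.2], by linarith [hθ.2, hφ.1]⟩
  set d : ℝ := |θ - φ| / 5 with hd
  set X : ℝ := sin (θ / 2) * sin (φ / 2) with hX
  set Y : ℝ := cos (θ / 2) * cos (φ / 2) with hY
  have hd0 : 0 < d := by positivity
  have hd1 : d ≤ 1 := by linarith [pi_le_four]
  have hX0 : 0 ≤ X := mul_nonneg (sin_half_nonneg hθ) (sin_half_nonneg hφ)
  have hY0 : 0 ≤ Y := mul_nonneg (cos_half_nonneg hθ) (cos_half_nonneg hφ)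
  have hX1 : X ≤ 1 := mul_le_one₀ (sin_le_one _) (sin_half_nonneg hφ) (sin_le_one _)
  have hY1 : Y ≤ 1 := mul_le_one₀ (cos_le_one _) (cos_half_nonneg hφ) (cos_le_one _)
  set P : ℝ := (d ^ 2 + X) ^ (-(α + 1 / 2)) * (d ^ 2 + Y) ^ (-(β + 1 / 2)) with hP
  have hP0 : 0 < P := by positivity
  have hqf : ∀ u ∈ Icc (-1 : ℝ) 1, ∀ v ∈ Icc (-1 : ℝ) 1, 0 ≤ qf θ φ u v := fun u hu v hv => by
    have := mul_nonneg (sub_nonneg.2 hu.2) hX0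
    have := mul_nonneg (sub_nonneg.2 hv.2) hY0
    linarith [hq u v, sq_nonneg d]
  have hpt : ∀ t ∈ Ioo (0 : ℝ) 1,
      ‖1 + ∫ v, (∫ u, (t ^ 2 + qf θ φ u v) ^ (-(α + β + 3/2 + W / (2 * p.toReal) + s / 2))
        ∂(PiMeas α)) ∂(PiMeas β)‖ ≤ K * P * (t + d) ^ (-(1 + W / p.toReal + s)) := by
    intro t ⟨ht0, ht1⟩
    have hnonneg : 0 ≤ ∫ v, (∫ u, (t ^ 2 + qf θ φ u v) ^ (-(α + 1 / 2 + (β + 1 / 2 + κ)))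
        ∂(PiMeas α)) ∂(PiMeas β) := by
      refine integral_nonneg_of_ae ?_
      filter_upwards [ae_PiMeas_mem_Icc β] with v hv
      refine integral_nonneg_of_ae ?_
      filter_upwards [ae_PiMeas_mem_Icc α] with u hu
      exact rpow_nonneg (add_nonneg (sq_nonneg t) (hqf u hu v hv)) _
    have hint := h₁ (t ^ 2 + d ^ 2) X Y (fun u v => t ^ 2 + qf θ φ u v) (by positivity) hX0 hY0
      fun u _ v _ => by linarith [hq u v]
    have hint' : C₁ * (t ^ 2 + d ^ 2) ^ (-κ) * (t ^ 2 + d ^ 2 + X) ^ (-(α + 1 / 2)) *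
        (t ^ 2 + d ^ 2 + Y) ^ (-(β + 1 / 2)) ≤ C₁ * 2 ^ κ * (P * (t + d) ^ (-(2 * κ))) := by
      calc _ ≤ C₁ * (2 ^ κ * (t + d) ^ (-(2 * κ))) * (d ^ 2 + X) ^ (-(α + 1 / 2)) *
            (d ^ 2 + Y) ^ (-(β + 1 / 2)) := by
            refine mul_le_mul (mul_le_mul (mul_le_mul_of_nonneg_left
              (add_sq_rpow_neg_le ht0 hd0 hκ0.le) hC₁.le) ?_ (by positivity) (by positivity)) ?_
              (by positivity) (by positivity)
            · exact rpow_le_rpow_of_nonpos (by positivity) (by linarith [sq_nonneg t]) (by linarith)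
            · exact rpow_le_rpow_of_nonpos (by positivity) (by linarith [sq_nonneg t]) (by linarith)
        _ = _ := by rw [hP]; ring
    have hd2 : d ^ 2 ≤ 1 := by nlinarith
    have e1 := one_le_two_rpow_mul_rpow_neg (z := t + d) (e := 2 * κ) (by linarith) (by linarith)
      (by linarith)
    have e2 := one_le_two_rpow_mul_rpow_neg (z := d ^ 2 + X) (by positivity) (by linarith) hA
    have e3 := one_le_two_rpow_mul_rpow_neg (z := d ^ 2 + Y) (by positivity) (by linarith) hB
    have hone : 1 ≤ 2 ^ (2 * κ) * 2 ^ (α + 1 / 2) * 2 ^ (β + 1 / 2) *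
        (P * (t + d) ^ (-(2 * κ))) := by
      refine (one_le_mul_of_one_le_of_one_le
        (one_le_mul_of_one_le_of_one_le e1 e2) e3).trans_eq ?_
      rw [hP]
      ring
    rw [hexp, Real.norm_of_nonneg (by linarith), ← hκ2, hK, mul_assoc, add_mul]
    exact add_le_add hone (hint.trans hint')
  have hμt : (muab α β (ballI θ |θ - φ|)).toReal ≤ L * d / P := by
    refine ENNReal.toReal_le_of_le_ofReal (by positivity) (hμ.trans_eq ?_)
    rw [hP, rpow_neg (by positivity), rpow_neg (by positivity), ← mul_inv, div_inv_eq_mul]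
    congr 1
    ring
  have hμpos : 0 < (muab α β (ballI θ |θ - φ|)).toReal :=
    ENNReal.toReal_pos hμ0 (ne_top_of_le_ne_top ENNReal.ofReal_ne_top hμ)
  calc _ ≤ eLpNorm ((K * P) • fun t : ℝ => (t + d) ^ (-(1 + W / p.toReal + s))) p
        ((volume.restrict (Ioo (0 : ℝ) 1)).withDensity
          (fun t => ENNReal.ofReal (t ^ (W - 1)))) := by
        refine eLpNorm_mono_ae_real ((withDensity_absolutelyContinuous _ _).ae_le ?_)
        filter_upwards [ae_restrict_mem measurableSet_Ioo] with t ht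
        exact hpt t ht
    _ ≤ ENNReal.ofReal (K * P) * ENNReal.ofReal (C₂ * d ^ (-(1 + s))) := by
        rw [eLpNorm_const_smul, Real.enorm_of_nonneg (by positivity)]
        gcongr
        exact h₂ d hd0
    _ ≤ _ := by
        rw [← ENNReal.ofReal_mul (by positivity)]
        refine ENNReal.ofReal_le_ofReal ?_
        calc K * P * (C₂ * d ^ (-(1 + s)))
            = K * C₂ * 5 ^ s * L * |θ - φ| ^ (-s) / (L * d / P) := by
              rw [neg_add, rpow_add hd0, rpow_neg_one, hd, div_rpow hD.le (by norm_num),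
                rpow_neg (by norm_num : (0 : ℝ) ≤ 5)]
              field_simp
          _ ≤ _ := div_le_div_of_nonneg_left (by positivity) hμpos hμt
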